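/- arXiv:math/0509348 — 5 statements merged into one kernel-verified Lean document; each statement's English description precedes it below -/
import Mathlib

section
/- Let V and W be finite-dimensional complex inner product spaces and let B₁, B₂ ∈ End(V), i ∈ Hom(W,V), j ∈ Hom(V,W) satisfy the second ADHM equation [B₁,B₁†] + [B₂,B₂†] + i∘i† − j†∘j = 0, where † denotes the adjoint. Then for every (z₁,z₂) ∈ ℂ², one has β(z₁,z₂)∘β(z₁,z₂)† = α(z₁,z₂)†∘α(z₁,z₂) as endomorphisms of V. -/
open LinearMap

variable {V W : Type*} [NormedAddCommGroup V] [InnerProductSpace ℂ V] [FiniteDimensional ℂ V]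
  [NormedAddCommGroup W] [InnerProductSpace ℂ W] [FiniteDimensional ℂ W]

/-- `V ⊕ V ⊕ W` with its Hilbert (orthogonal direct sum) inner product structure. -/
abbrev adhmTotal (V W : Type*) [NormedAddCommGroup V] [InnerProductSpace ℂ V]
    [NormedAddCommGroup W] [InnerProductSpace ℂ W] : Type _ :=
  WithLp 2 (V × WithLp 2 (V × W))

noncomputable instance : FiniteDimensional ℂ (adhmTotal V W) :=
  Module.Finite.equiv (WithLp.linearEquiv 2 ℂ (V × WithLp 2 (V × W))).symm

/-- The ADHM map `α(z₁,z₂) : V → V ⊕ V ⊕ W`, `v ↦ ((B₁+z₁·1)v, (B₂+z₂·1)v, j v)`. -/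
noncomputable def adhmAlpha (B₁ B₂ : V →ₗ[ℂ] V) (j : V →ₗ[ℂ] W) (z₁ z₂ : ℂ) :
    V →ₗ[ℂ] adhmTotal V W :=
  (WithLp.linearEquiv 2 ℂ (V × WithLp 2 (V × W))).symm.toLinearMap ∘ₗ
    ((B₁ + z₁ • LinearMap.id).prod
      ((WithLp.linearEquiv 2 ℂ (V × W)).symm.toLinearMap ∘ₗ
        (B₂ + z₂ • LinearMap.id).prod j))

/-- The ADHM map `β(z₁,z₂) : V ⊕ V ⊕ W → V`, `(v₁,v₂,w) ↦ −(B₂+z₂·1)v₁ + (B₁+z₁·1)v₂ + i w`. -/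
noncomputable def adhmBeta (B₁ B₂ : V →ₗ[ℂ] V) (i : W →ₗ[ℂ] V) (z₁ z₂ : ℂ) :
    adhmTotal V W →ₗ[ℂ] V :=
  ((-(B₂ + z₂ • LinearMap.id)) ∘ₗ LinearMap.fst ℂ V (V × W)
    + (B₁ + z₁ • LinearMap.id) ∘ₗ ((LinearMap.fst ℂ V W) ∘ₗ (LinearMap.snd ℂ V (V × W)))
    + i ∘ₗ ((LinearMap.snd ℂ V W) ∘ₗ (LinearMap.snd ℂ V (V × W)))) ∘ₗ
    ((LinearMap.id : V →ₗ[ℂ] V).prodMap (WithLp.linearEquiv 2 ℂ (V × W)).toLinearMap) ∘ₗ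
    (WithLp.linearEquiv 2 ℂ (V × WithLp 2 (V × W))).toLinearMap

/-!
Since `α` is a column and `β` a row of operators between orthogonal direct sums,
`α† α = b₁† b₁ + b₂† b₂ + j† j` and `β β† = b₂ b₂† + b₁ b₁† + i i†`, where `bₖ = Bₖ + zₖ`. Hence
`β β† - α† α = [b₁, b₁†] + [b₂, b₂†] + i i† - j† j`, and the commutators do not see the shifts `zₖ`.
-/

theorem lie_add_smul_one_star {R A : Type*} [CommSemiring R] [StarRing R] [Ring A] [StarRing A]
    [Algebra R A] [StarModule R A] (a : A) (c : R) :
    ⁅a + c • 1, star (a + c • 1)⁆ = ⁅a, star a⁆ := by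
  simp only [Ring.lie_def, star_add, star_smul, star_one, mul_add, add_mul, mul_smul_comm,
    smul_add, smul_mul_assoc, mul_one, one_mul, smul_comm (star c) c]
  abel

section Module

variable {R E F G : Type*} [Semiring R] [AddCommMonoid E] [Module R E]
  [AddCommGroup F] [Module R F] [AddCommGroup G] [Module R G]

/-- The column operator `v ↦ (f v, g v)` into the orthogonal direct sum, i.e. `LinearMap.prod` with
codomain retyped as `WithLp 2`. -/
def l2Prod (f : E →ₗ[R] F) (g : E →ₗ[R] G) : E →ₗ[R] WithLp 2 (F × G) :=
  (WithLp.linearEquiv 2 R (F × G)).symm.toLinearMap ∘ₗ f.prod g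

/-- The row operator `(x, y) ↦ f x + g y` on the orthogonal direct sum, i.e. `LinearMap.coprod` with
domain retyped as `WithLp 2`. -/
def l2Coprod (f : F →ₗ[R] E) (g : G →ₗ[R] E) : WithLp 2 (F × G) →ₗ[R] E :=
  f.coprod g ∘ₗ (WithLp.linearEquiv 2 R (F × G)).toLinearMap

theorem l2Coprod_comp_l2Prod {E' : Type*} [AddCommMonoid E'] [Module R E']
    (f : F →ₗ[R] E') (g : G →ₗ[R] E') (h : E →ₗ[R] F) (k : E →ₗ[R] G) :
    l2Coprod f g ∘ₗ l2Prod h k = f ∘ₗ h + g ∘ₗ k :=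
  rfl

end Module

section Adjoint

variable {𝕜 E F G : Type*} [RCLike 𝕜]
  [NormedAddCommGroup E] [InnerProductSpace 𝕜 E] [FiniteDimensional 𝕜 E]
  [NormedAddCommGroup F] [InnerProductSpace 𝕜 F] [FiniteDimensional 𝕜 F]
  [NormedAddCommGroup G] [InnerProductSpace 𝕜 G] [FiniteDimensional 𝕜 G]

theorem adjoint_l2Prod (f : E →ₗ[𝕜] F) (g : E →ₗ[𝕜] G) :
    adjoint (l2Prod f g) = l2Coprod (adjoint f) (adjoint g) := by
  refine ((eq_adjoint_iff _ _).mpr fun p v => ?_).symm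
  simp [l2Prod, l2Coprod, WithLp.prod_inner_apply, inner_add_left, adjoint_inner_left]

theorem adjoint_l2Coprod (f : F →ₗ[𝕜] E) (g : G →ₗ[𝕜] E) :
    adjoint (l2Coprod f g) = l2Prod (adjoint f) (adjoint g) := by
  rw [← adjoint_adjoint (l2Prod (adjoint f) (adjoint g)), adjoint_l2Prod, adjoint_adjoint,
    adjoint_adjoint]

theorem adjoint_l2Prod_comp_self (f : E →ₗ[𝕜] F) (g : E →ₗ[𝕜] G) :
    adjoint (l2Prod f g) ∘ₗ l2Prod f g = adjoint f ∘ₗ f + adjoint g ∘ₗ g := by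
  rw [adjoint_l2Prod, l2Coprod_comp_l2Prod]

theorem l2Coprod_comp_adjoint_self (f : F →ₗ[𝕜] E) (g : G →ₗ[𝕜] E) :
    l2Coprod f g ∘ₗ adjoint (l2Coprod f g) = f ∘ₗ adjoint f + g ∘ₗ adjoint g := by
  rw [adjoint_l2Coprod, l2Coprod_comp_l2Prod]

theorem add_smul_id_comp_adjoint_sub (B : E →ₗ[𝕜] E) (z : 𝕜) :
    (B + z • LinearMap.id) ∘ₗ adjoint (B + z • LinearMap.id)
        - adjoint (B + z • LinearMap.id) ∘ₗ (B + z • LinearMap.id)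
      = B ∘ₗ adjoint B - adjoint B ∘ₗ B :=
  lie_add_smul_one_star B z

end Adjoint

section BlockForm

variable {E F : Type*} [NormedAddCommGroup E] [InnerProductSpace ℂ E]
  [NormedAddCommGroup F] [InnerProductSpace ℂ F]

theorem adhmAlpha_eq_l2Prod (B₁ B₂ : E →ₗ[ℂ] E) (j : E →ₗ[ℂ] F) (z₁ z₂ : ℂ) :
    adhmAlpha B₁ B₂ j z₁ z₂
      = l2Prod (B₁ + z₁ • LinearMap.id) (l2Prod (B₂ + z₂ • LinearMap.id) j) :=
  rfl

theorem adhmBeta_eq_l2Coprod (B₁ B₂ : E →ₗ[ℂ] E) (i : F →ₗ[ℂ] E) (z₁ z₂ : ℂ) :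
    adhmBeta B₁ B₂ i z₁ z₂
      = l2Coprod (-(B₂ + z₂ • LinearMap.id)) (l2Coprod (B₁ + z₁ • LinearMap.id) i) :=
  LinearMap.ext fun _ => add_assoc _ _ _

end BlockForm

theorem adjoint_adhmAlpha_comp_self (B₁ B₂ : V →ₗ[ℂ] V) (j : V →ₗ[ℂ] W) (z₁ z₂ : ℂ) :
    adjoint (adhmAlpha B₁ B₂ j z₁ z₂) ∘ₗ adhmAlpha B₁ B₂ j z₁ z₂
      = adjoint (B₁ + z₁ • LinearMap.id) ∘ₗ (B₁ + z₁ • LinearMap.id)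
        + (adjoint (B₂ + z₂ • LinearMap.id) ∘ₗ (B₂ + z₂ • LinearMap.id) + adjoint j ∘ₗ j) := by
  rw [adhmAlpha_eq_l2Prod, adjoint_l2Prod_comp_self, adjoint_l2Prod_comp_self]

theorem adhmBeta_comp_adjoint_self (B₁ B₂ : V →ₗ[ℂ] V) (i : W →ₗ[ℂ] V) (z₁ z₂ : ℂ) :
    adhmBeta B₁ B₂ i z₁ z₂ ∘ₗ adjoint (adhmBeta B₁ B₂ i z₁ z₂)
      = (B₂ + z₂ • LinearMap.id) ∘ₗ adjoint (B₂ + z₂ • LinearMap.id)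
        + ((B₁ + z₁ • LinearMap.id) ∘ₗ adjoint (B₁ + z₁ • LinearMap.id) + i ∘ₗ adjoint i) := by
  rw [adhmBeta_eq_l2Coprod, l2Coprod_comp_adjoint_self, l2Coprod_comp_adjoint_self, map_neg,
    neg_comp, comp_neg, neg_neg]

theorem adhm_beta_betaAdjoint_eq_alphaAdjoint_alpha_general
    (B₁ B₂ : V →ₗ[ℂ] V) (i : W →ₗ[ℂ] V) (j : V →ₗ[ℂ] W) (z₁ z₂ : ℂ) :
    adhmBeta B₁ B₂ i z₁ z₂ ∘ₗ adjoint (adhmBeta B₁ B₂ i z₁ z₂)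
      = adjoint (adhmAlpha B₁ B₂ j z₁ z₂) ∘ₗ adhmAlpha B₁ B₂ j z₁ z₂
        + ((B₁ ∘ₗ adjoint B₁ - adjoint B₁ ∘ₗ B₁)
          + (B₂ ∘ₗ adjoint B₂ - adjoint B₂ ∘ₗ B₂)
          + i ∘ₗ adjoint i - adjoint j ∘ₗ j) := by
  rw [adhmBeta_comp_adjoint_self, adjoint_adhmAlpha_comp_self,
    ← add_smul_id_comp_adjoint_sub B₁ z₁, ← add_smul_id_comp_adjoint_sub B₂ z₂]
  abel

/-- If the second ADHM equation `[B₁,B₁†] + [B₂,B₂†] + i∘i† − j†∘j = 0` holds, then for every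
`(z₁,z₂) ∈ ℂ²` one has `β(z₁,z₂)∘β(z₁,z₂)† = α(z₁,z₂)†∘α(z₁,z₂)` as endomorphisms of `V`. -/
theorem adhm_beta_betaAdjoint_eq_alphaAdjoint_alpha
    (B₁ B₂ : V →ₗ[ℂ] V) (i : W →ₗ[ℂ] V) (j : V →ₗ[ℂ] W)
    (hADHM2 : (B₁ ∘ₗ adjoint B₁ - adjoint B₁ ∘ₗ B₁)
        + (B₂ ∘ₗ adjoint B₂ - adjoint B₂ ∘ₗ B₂)
        + i ∘ₗ adjoint i - adjoint j ∘ₗ j = 0) :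
    ∀ z₁ z₂ : ℂ,
      adhmBeta B₁ B₂ i z₁ z₂ ∘ₗ adjoint (adhmBeta B₁ B₂ i z₁ z₂)
        = adjoint (adhmAlpha B₁ B₂ j z₁ z₂) ∘ₗ adhmAlpha B₁ B₂ j z₁ z₂ := by
  intro z₁ z₂
  rw [adhm_beta_betaAdjoint_eq_alphaAdjoint_alpha_general B₁ B₂ i j, hADHM2, add_zero]
end

section
/- Let V and W be finite-dimensional complex inner product spaces and let B₁, B₂ ∈ End(V), i ∈ Hom(W,V), j ∈ Hom(V,W) satisfy both ADHM equations [B₁,B₂] + i∘j = 0 and [B₁,B₁†] + [B₂,B₂†] + i∘i† − j†∘j = 0. For each (z₁,z₂) ∈ ℂ², let 𝒟(z₁,z₂) : V ⊕ V ⊕ W → V ⊕ V be the map u ↦ (β(z₁,z₂)u, α(z₁,z₂)†u). Then Ξ := 𝒟∘𝒟† is the block-diagonal endomorphism of V ⊕ V acting as β∘β† on each of the two summands, i.e. 𝒟𝒟†(v₁,v₂) = (ββ†v₁, ββ†v₂); in particular, if β(z₁,z₂) is surjective then Ξ is invertible. -/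
open LinearMap

variable {V W : Type*} [NormedAddCommGroup V] [InnerProductSpace ℂ V] [FiniteDimensional ℂ V]
  [NormedAddCommGroup W] [InnerProductSpace ℂ W] [FiniteDimensional ℂ W]

noncomputable instance : FiniteDimensional ℂ (WithLp 2 (V × V)) :=
  Module.Finite.equiv (WithLp.linearEquiv 2 ℂ (V × V)).symm

/-- The operator `𝒟(z₁,z₂) : V ⊕ V ⊕ W → V ⊕ V`, `u ↦ (β(z₁,z₂)u, α(z₁,z₂)†u)`. -/
noncomputable def adhmD (B₁ B₂ : V →ₗ[ℂ] V) (i : W →ₗ[ℂ] V) (j : V →ₗ[ℂ] W) (z₁ z₂ : ℂ) :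
    adhmTotal V W →ₗ[ℂ] WithLp 2 (V × V) :=
  (WithLp.linearEquiv 2 ℂ (V × V)).symm.toLinearMap ∘ₗ
    (adhmBeta B₁ B₂ i z₁ z₂).prod (adjoint (adhmAlpha B₁ B₂ j z₁ z₂))

/-!
For all linear data, `βα = [B₁, B₂] + ij` and
`ββ† - α†α = [B₁, B₁†] + [B₂, B₂†] + ii† - j†j`, since adding scalars to `B₁` and `B₂` changes no
commutator. The ADHM equations thus say exactly that `βα = 0` and `ββ† = α†α`. The blocks of `𝒟𝒟†`
for `𝒟 = (β, α†)` are `ββ†` and `α†α` on the diagonal, `βα` and `(βα)†` off it. Finally, `ββ†` has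
the same range as `β`, so it is invertible when `β` is surjective.
-/

section HilbertSum

variable {𝕜 E F G : Type*} [RCLike 𝕜]
  [NormedAddCommGroup E] [InnerProductSpace 𝕜 E] [NormedAddCommGroup F] [InnerProductSpace 𝕜 F]
  [NormedAddCommGroup G] [InnerProductSpace 𝕜 G]

/-- The map `x ↦ (f x, g x)` into the orthogonal direct sum `F ⊕ G`, i.e. `LinearMap.prod` with the
`L²` norm instead of the sup norm on its codomain. The operators `α`, `β†` and `𝒟` of the ADHM
construction are all of this form. -/
def hilbertProd (f : E →ₗ[𝕜] F) (g : E →ₗ[𝕜] G) : E →ₗ[𝕜] WithLp 2 (F × G) :=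
  (WithLp.linearEquiv 2 𝕜 (F × G)).symm.toLinearMap ∘ₗ f.prod g

@[simp]
theorem hilbertProd_apply (f : E →ₗ[𝕜] F) (g : E →ₗ[𝕜] G) (x : E) :
    hilbertProd f g x = WithLp.toLp 2 (f x, g x) :=
  rfl

variable [FiniteDimensional 𝕜 E] [FiniteDimensional 𝕜 F]

theorem bijective_comp_adjoint_of_surjective {f : E →ₗ[𝕜] F} (hf : Function.Surjective f) :
    Function.Bijective (f ∘ₗ adjoint f) := by
  have hsurj : Function.Surjective (f ∘ₗ adjoint f) := by
    rw [← range_eq_top, range_self_comp_adjoint, range_eq_top.mpr hf]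
  exact ⟨injective_iff_surjective.mpr hsurj, hsurj⟩

variable [FiniteDimensional 𝕜 G]

@[simp]
theorem adjoint_hilbertProd_apply (f : E →ₗ[𝕜] F) (g : E →ₗ[𝕜] G) (p : WithLp 2 (F × G)) :
    adjoint (hilbertProd f g) p = adjoint f p.fst + adjoint g p.snd :=
  ext_inner_left 𝕜 fun x => by
    simp [adjoint_inner_right, inner_add_right, WithLp.prod_inner_apply]

theorem hilbertProd_comp_adjoint_eq_prodMap {f : E →ₗ[𝕜] F} {g : E →ₗ[𝕜] G}
    (hfg : f ∘ₗ adjoint g = 0) :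
    hilbertProd f g ∘ₗ adjoint (hilbertProd f g)
      = withLpMap 2 ((f ∘ₗ adjoint f).prodMap (g ∘ₗ adjoint g)) := by
  have hgf : g ∘ₗ adjoint f = 0 := by
    simpa only [adjoint_comp, adjoint_adjoint, map_zero] using congrArg adjoint hfg
  ext p : 1
  have hfg_snd : f (adjoint g p.snd) = 0 := LinearMap.congr_fun hfg p.snd
  have hgf_fst : g (adjoint f p.fst) = 0 := LinearMap.congr_fun hgf p.fst
  simp [hfg_snd, hgf_fst, WithLp.map]

end HilbertSum

section

omit [FiniteDimensional ℂ V] [FiniteDimensional ℂ W]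

theorem adhmAlpha_eq_hilbertProd (B₁ B₂ : V →ₗ[ℂ] V) (j : V →ₗ[ℂ] W) (z₁ z₂ : ℂ) :
    adhmAlpha B₁ B₂ j z₁ z₂
      = hilbertProd (B₁ + z₁ • LinearMap.id) (hilbertProd (B₂ + z₂ • LinearMap.id) j) :=
  rfl

theorem adhmBeta_apply (B₁ B₂ : V →ₗ[ℂ] V) (i : W →ₗ[ℂ] V) (z₁ z₂ : ℂ) (u : adhmTotal V W) :
    adhmBeta B₁ B₂ i z₁ z₂ u
      = -(B₂ + z₂ • LinearMap.id : V →ₗ[ℂ] V) u.fst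
        + (B₁ + z₁ • LinearMap.id : V →ₗ[ℂ] V) u.snd.fst + i u.snd.snd :=
  rfl

theorem adhmBeta_comp_adhmAlpha (B₁ B₂ : V →ₗ[ℂ] V) (i : W →ₗ[ℂ] V) (j : V →ₗ[ℂ] W)
    (z₁ z₂ : ℂ) :
    adhmBeta B₁ B₂ i z₁ z₂ ∘ₗ adhmAlpha B₁ B₂ j z₁ z₂ = B₁ ∘ₗ B₂ - B₂ ∘ₗ B₁ + i ∘ₗ j := by
  ext v
  simp only [adhmAlpha_eq_hilbertProd, adhmBeta_apply, hilbertProd_apply, WithLp.toLp_fst,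
    WithLp.toLp_snd, comp_apply, LinearMap.add_apply, LinearMap.sub_apply, LinearMap.smul_apply,
    id_apply, map_add, map_smul]
  module

end

theorem adhmD_eq_hilbertProd (B₁ B₂ : V →ₗ[ℂ] V) (i : W →ₗ[ℂ] V) (j : V →ₗ[ℂ] W) (z₁ z₂ : ℂ) :
    adhmD B₁ B₂ i j z₁ z₂
      = hilbertProd (adhmBeta B₁ B₂ i z₁ z₂) (adjoint (adhmAlpha B₁ B₂ j z₁ z₂)) :=
  rfl

theorem adjoint_adhmBeta (B₁ B₂ : V →ₗ[ℂ] V) (i : W →ₗ[ℂ] V) (z₁ z₂ : ℂ) :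
    adjoint (adhmBeta B₁ B₂ i z₁ z₂)
      = hilbertProd (-adjoint (B₂ + z₂ • LinearMap.id))
          (hilbertProd (adjoint (B₁ + z₁ • LinearMap.id)) (adjoint i)) := by
  rw [eq_comm, eq_adjoint_iff]
  intro v u
  simp only [hilbertProd_apply, WithLp.prod_inner_apply, adhmBeta_apply, LinearMap.neg_apply,
    inner_neg_left, inner_neg_right, inner_add_right, adjoint_inner_left, add_assoc,
    WithLp.fst, WithLp.snd]

theorem adhmBeta_comp_adjoint_sub_adjoint_comp_adhmAlpha (B₁ B₂ : V →ₗ[ℂ] V) (i : W →ₗ[ℂ] V)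
    (j : V →ₗ[ℂ] W) (z₁ z₂ : ℂ) :
    adhmBeta B₁ B₂ i z₁ z₂ ∘ₗ adjoint (adhmBeta B₁ B₂ i z₁ z₂)
        - adjoint (adhmAlpha B₁ B₂ j z₁ z₂) ∘ₗ adhmAlpha B₁ B₂ j z₁ z₂
      = (B₁ ∘ₗ adjoint B₁ - adjoint B₁ ∘ₗ B₁) + (B₂ ∘ₗ adjoint B₂ - adjoint B₂ ∘ₗ B₂)
        + i ∘ₗ adjoint i - adjoint j ∘ₗ j := by
  ext v
  simp only [adjoint_adhmBeta, adhmAlpha_eq_hilbertProd, adhmBeta_apply, hilbertProd_apply,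
    adjoint_hilbertProd_apply, WithLp.toLp_fst, WithLp.toLp_snd, comp_apply, LinearMap.add_apply,
    LinearMap.sub_apply, LinearMap.neg_apply, LinearMap.smul_apply, id_apply, map_add, map_neg,
    map_smul, LinearEquiv.map_smulₛₗ, adjoint_id]
  module

theorem adhmD_comp_adjoint_eq_prodMap {B₁ B₂ : V →ₗ[ℂ] V} {i : W →ₗ[ℂ] V} {j : V →ₗ[ℂ] W}
    {z₁ z₂ : ℂ} (hβα : adhmBeta B₁ B₂ i z₁ z₂ ∘ₗ adhmAlpha B₁ B₂ j z₁ z₂ = 0) :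
    adhmD B₁ B₂ i j z₁ z₂ ∘ₗ adjoint (adhmD B₁ B₂ i j z₁ z₂)
      = withLpMap 2 ((adhmBeta B₁ B₂ i z₁ z₂ ∘ₗ adjoint (adhmBeta B₁ B₂ i z₁ z₂)).prodMap
          (adjoint (adhmAlpha B₁ B₂ j z₁ z₂) ∘ₗ adhmAlpha B₁ B₂ j z₁ z₂)) := by
  rw [← adjoint_adjoint (adhmAlpha B₁ B₂ j z₁ z₂)] at hβα
  simpa only [adhmD_eq_hilbertProd, adjoint_adjoint] using hilbertProd_comp_adjoint_eq_prodMap hβα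

/-- If both ADHM equations hold, then `Ξ = 𝒟𝒟†` is block diagonal, acting as `ββ†` on each of
the two summands of `V ⊕ V`; in particular, if `β(z₁,z₂)` is surjective then `Ξ` is invertible. -/
theorem adhm_D_comp_Dadjoint_diag
    (B₁ B₂ : V →ₗ[ℂ] V) (i : W →ₗ[ℂ] V) (j : V →ₗ[ℂ] W)
    (hADHM1 : B₁ ∘ₗ B₂ - B₂ ∘ₗ B₁ + i ∘ₗ j = 0)
    (hADHM2 : (B₁ ∘ₗ adjoint B₁ - adjoint B₁ ∘ₗ B₁)
        + (B₂ ∘ₗ adjoint B₂ - adjoint B₂ ∘ₗ B₂)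
        + i ∘ₗ adjoint i - adjoint j ∘ₗ j = 0)
    (z₁ z₂ : ℂ) :
    (∀ v₁ v₂ : V,
      (adhmD B₁ B₂ i j z₁ z₂ ∘ₗ adjoint (adhmD B₁ B₂ i j z₁ z₂))
          ((WithLp.equiv 2 (V × V)).symm (v₁, v₂))
        = (WithLp.equiv 2 (V × V)).symm
            ((adhmBeta B₁ B₂ i z₁ z₂ ∘ₗ adjoint (adhmBeta B₁ B₂ i z₁ z₂)) v₁,
             (adhmBeta B₁ B₂ i z₁ z₂ ∘ₗ adjoint (adhmBeta B₁ B₂ i z₁ z₂)) v₂))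
    ∧ (Function.Surjective (adhmBeta B₁ B₂ i z₁ z₂) →
        Function.Bijective (adhmD B₁ B₂ i j z₁ z₂ ∘ₗ adjoint (adhmD B₁ B₂ i j z₁ z₂))) := by
  have hβα : adhmBeta B₁ B₂ i z₁ z₂ ∘ₗ adhmAlpha B₁ B₂ j z₁ z₂ = 0 :=
    (adhmBeta_comp_adhmAlpha B₁ B₂ i j z₁ z₂).trans hADHM1
  have hββ_eq_αα : adhmBeta B₁ B₂ i z₁ z₂ ∘ₗ adjoint (adhmBeta B₁ B₂ i z₁ z₂)
      = adjoint (adhmAlpha B₁ B₂ j z₁ z₂) ∘ₗ adhmAlpha B₁ B₂ j z₁ z₂ :=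
    sub_eq_zero.mp <|
      (adhmBeta_comp_adjoint_sub_adjoint_comp_adhmAlpha B₁ B₂ i j z₁ z₂).trans hADHM2
  rw [adhmD_comp_adjoint_eq_prodMap hβα, ← hββ_eq_αα]
  refine ⟨fun v₁ v₂ => rfl, fun hβ => ?_⟩
  have hββ := bijective_comp_adjoint_of_surjective hβ
  exact (WithLp.congr 2 (Equiv.ofBijective _ (hββ.prodMap hββ))).bijective
end

section
/- The basic instanton on ℝ⁴ is anti-self-dual: if A_μ(q) = Im(q · conj(e_μ))/(1 + |q|²) for μ = 1,…,4, then its curvature components F_{μν} = ∂_μA_ν − ∂_νA_μ + [A_μ, A_ν] satisfy, at every point q ∈ ℍ, the anti-self-duality equations F₁₂ = F₃₄, F₁₃ = −F₂₄, F₁₄ = F₂₃. -/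
/-- The standard quaternion basis `e₁ = 1, e₂ = 𝐢, e₃ = 𝐣, e₄ = 𝐤`, identifying `ℝ⁴ ≅ ℍ`. -/
noncomputable def qe : Fin 4 → Quaternion ℝ
  | 0 => 1
  | 1 => ⟨0, 1, 0, 0⟩
  | 2 => ⟨0, 0, 1, 0⟩
  | 3 => ⟨0, 0, 0, 1⟩

/-- The imaginary part `Im p = (p − conj p)/2` of a quaternion. -/
noncomputable def qIm (p : Quaternion ℝ) : Quaternion ℝ := (p - star p) / 2

/-- The components `A_μ(q) = Im(q · conj(e_μ))/(1 + |q|²)` of the basic instanton on `ℝ⁴ ≅ ℍ`. -/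
noncomputable def basicInstanton (μ : Fin 4) (q : Quaternion ℝ) : Quaternion ℝ :=
  (1 + ‖q‖ ^ 2)⁻¹ • qIm (q * star (qe μ))

/-- The curvature components `F_{μν} = ∂_μA_ν − ∂_νA_μ + [A_μ, A_ν]` of a connection on
`ℝ⁴ ≅ ℍ` with imaginary-quaternion (su(2)) values. -/
noncomputable def qCurv (A : Fin 4 → Quaternion ℝ → Quaternion ℝ) (μ ν : Fin 4)
    (q : Quaternion ℝ) : Quaternion ℝ :=
  fderiv ℝ (A ν) q (qe μ) - fderiv ℝ (A μ) q (qe ν) + (A μ q * A ν q - A ν q * A μ q)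

/-!
Write `s = (1 + |q|²)⁻¹`, `a = q v̄` and `b = q w̄` for a pair `v`, `w` of basis vectors. The
derivative terms of the curvature contribute `2s Im(v w̄) - 2s² (Re a · Im b - Re b · Im a)`, while
`[Im a, Im b] = 2 (Re a · Im b - Re b · Im a - Im(ā b))` and `ā b = |q|² v w̄`. Everything cancels
except `F(v, w) = 2s² Im(v w̄)`, so anti-self-duality reduces to relations between the units such as
`1 · conj 𝐢 = 𝐣 · conj 𝐤`.
-/

section Calculus

variable {E F : Type*} [NormedAddCommGroup E] [InnerProductSpace ℝ E]
  [NormedAddCommGroup F] [NormedSpace ℝ F] {c : ℝ} {x : E}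

theorem hasFDerivAt_inv_add_norm_sq (hx : c + ‖x‖ ^ 2 ≠ 0) :
    HasFDerivAt (fun y : E ↦ (c + ‖y‖ ^ 2)⁻¹)
      (-((c + ‖x‖ ^ 2) ^ 2)⁻¹ • (2 • innerSL ℝ x)) x :=
  (hasDerivAt_inv hx).comp_hasFDerivAt x
    ((hasStrictFDerivAt_norm_sq x).hasFDerivAt.const_add c)

theorem fderiv_inv_add_norm_sq_smul_clm (hx : c + ‖x‖ ^ 2 ≠ 0) (L : E →L[ℝ] F) (v : E) :
    fderiv ℝ (fun y ↦ (c + ‖y‖ ^ 2)⁻¹ • L y) x v =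
      (c + ‖x‖ ^ 2)⁻¹ • L v - (2 * (c + ‖x‖ ^ 2)⁻¹ ^ 2 * inner ℝ x v) • L x := by
  rw [((hasFDerivAt_inv_add_norm_sq hx).fun_smul L.hasFDerivAt).fderiv]
  simp only [add_apply, smul_apply, ContinuousLinearMap.smulRight_apply,
    innerSL_apply_apply, smul_eq_mul, nsmul_eq_mul, inv_pow]
  module

end Calculus

section ImaginaryPart

open Quaternion

variable {R : Type*} [CommRing R]

theorem im_mul_im_sub_im_mul_im (a b : ℍ[R]) :
    a.im * b.im - b.im * a.im =
      (2 : R) • (a.re • b.im - b.re • a.im - (star a * b).im) := by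
  ext <;> simp <;> ring

theorem im_mul_star_swap (a b : ℍ[R]) :
    (b * star a).im = -(a * star b).im := by
  rw [← im_star, star_mul, star_star]

theorem star_mul_mul_star_eq_normSq_smul (q v w : ℍ[R]) :
    star (q * star v) * (q * star w) = normSq q • (v * star w) := by
  rw [star_mul, star_star, mul_assoc, ← mul_assoc (star q), star_mul_self, coe_mul_eq_smul,
    mul_smul_comm]

theorem qIm_eq_im (p : ℍ[ℝ]) : qIm p = p.im := by
  have : CharZero ℍ[ℝ] := algebraRat.charZero ℍ[ℝ]
  have sub_star_eq : p - star p = p.im * 2 := by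
    ext <;> simp [mul_two]
  rw [qIm, sub_star_eq, mul_div_cancel_right₀ _ two_ne_zero]

/-- The imaginary part as a continuous linear map, so that its derivative is available. -/
def imCLM : ℍ[ℝ] →L[ℝ] ℍ[ℝ] where
  toFun := Quaternion.im
  map_add' := im_add
  map_smul' r p := im_smul p r
  cont := continuous_im

end ImaginaryPart

section Curvature

open Quaternion

theorem basicInstanton_apply (μ : Fin 4) (q : ℍ[ℝ]) :
    basicInstanton μ q = (1 + ‖q‖ ^ 2)⁻¹ • (q * star (qe μ)).im := by
  rw [basicInstanton, qIm_eq_im]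

theorem fderiv_basicInstanton_apply (μ : Fin 4) (q v : ℍ[ℝ]) :
    fderiv ℝ (basicInstanton μ) q v =
      (1 + ‖q‖ ^ 2)⁻¹ • (v * star (qe μ)).im -
        (2 * (1 + ‖q‖ ^ 2)⁻¹ ^ 2 * (q * star v).re) • (q * star (qe μ)).im := by
  let L : ℍ[ℝ] →L[ℝ] ℍ[ℝ] := imCLM ∘L (ContinuousLinearMap.mul ℝ ℍ[ℝ]).flip (star (qe μ))
  have basicInstanton_eq : basicInstanton μ = fun y ↦ (1 + ‖y‖ ^ 2)⁻¹ • L y :=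
    funext (basicInstanton_apply μ)
  rw [basicInstanton_eq, fderiv_inv_add_norm_sq_smul_clm (by positivity), inner_def]
  rfl

theorem qCurv_basicInstanton (μ ν : Fin 4) (q : ℍ[ℝ]) :
    qCurv basicInstanton μ ν q =
      (2 * (1 + ‖q‖ ^ 2)⁻¹ ^ 2) • (qe μ * star (qe ν)).im := by
  set s : ℝ := (1 + ‖q‖ ^ 2)⁻¹ with hs
  set a := q * star (qe μ) with ha
  set b := q * star (qe ν) with hb
  set m := (qe μ * star (qe ν)).im with hm
  have im_star_mul : (star a * b).im = ‖q‖ ^ 2 • m := by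
    rw [ha, hb, star_mul_mul_star_eq_normSq_smul, im_smul, normSq_eq_norm_mul_self, sq]
  have scalar_eq : s - s ^ 2 * ‖q‖ ^ 2 = s ^ 2 := by
    rw [hs]
    field_simp
    ring
  calc qCurv basicInstanton μ ν q
      = (s • m - (2 * s ^ 2 * a.re) • b.im) - (s • -m - (2 * s ^ 2 * b.re) • a.im) +
          (s • a.im * s • b.im - s • b.im * s • a.im) := by
        simp only [qCurv, fderiv_basicInstanton_apply, basicInstanton_apply,
          im_mul_star_swap (qe μ) (qe ν), ← hs, ← ha, ← hb, ← hm]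
    _ = (2 * s) • m - (2 * s ^ 2) • (a.re • b.im - b.re • a.im) +
          s ^ 2 • (a.im * b.im - b.im * a.im) := by
        simp only [smul_mul_smul_comm]
        module
    _ = (2 * (s - s ^ 2 * ‖q‖ ^ 2)) • m := by
        rw [im_mul_im_sub_im_mul_im, im_star_mul]
        module
    _ = (2 * s ^ 2) • m := by rw [scalar_eq]

theorem qe_zero_mul_star_qe_one : qe 0 * star (qe 1) = qe 2 * star (qe 3) := by
  ext <;> simp <;> simp [qe]

theorem qe_zero_mul_star_qe_two : qe 0 * star (qe 2) = -(qe 1 * star (qe 3)) := by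
  ext <;> simp <;> simp [qe]

theorem qe_zero_mul_star_qe_three : qe 0 * star (qe 3) = qe 1 * star (qe 2) := by
  ext <;> simp <;> simp [qe]

end Curvature

/-- The basic instanton is anti-self-dual: its curvature satisfies
`F₁₂ = F₃₄`, `F₁₃ = −F₂₄`, `F₁₄ = F₂₃` at every point of `ℝ⁴ ≅ ℍ`. -/
theorem basicInstanton_isASD :
    ∀ q : Quaternion ℝ,
      qCurv basicInstanton 0 1 q = qCurv basicInstanton 2 3 q
      ∧ qCurv basicInstanton 0 2 q = -qCurv basicInstanton 1 3 q
      ∧ qCurv basicInstanton 0 3 q = qCurv basicInstanton 1 2 q := by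
  intro q
  simp only [qCurv_basicInstanton]
  refine ⟨?_, ?_, ?_⟩
  · rw [qe_zero_mul_star_qe_one]
  · rw [qe_zero_mul_star_qe_two, Quaternion.im_neg, smul_neg]
  · rw [qe_zero_mul_star_qe_three]
end

section
/- Instantons solve the Yang–Mills equation: let A₁,…,A₄ : ℝ⁴ → u(n) be twice continuously differentiable and anti-self-dual, i.e. the curvature components F_{ij} = ∂ᵢA_j − ∂_jA_i + [A_i, A_j] satisfy F₁₂ = F₃₄, F₁₃ = −F₂₄, F₁₄ = F₂₃ everywhere. Then A satisfies the Yang–Mills equation in coordinates: for each j ∈ {1,2,3,4} and every x ∈ ℝ⁴, Σ_{i=1}^{4} (∂ᵢF_{ij} + [A_i, F_{ij}]) = 0, where F_{ji} = −F_{ij} and F_{ii} = 0. -/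
open Matrix

attribute [local instance] Matrix.frobeniusNormedAddCommGroup Matrix.frobeniusNormedSpace

/-- The standard basis vectors of `ℝ⁴`. -/
noncomputable def e4 (i : Fin 4) : EuclideanSpace ℝ (Fin 4) := EuclideanSpace.single i 1

/-- The curvature components `F_{ij} = ∂ᵢA_j − ∂_jA_i + [A_i, A_j]` of a matrix-valued
connection `A` on `ℝ⁴`. -/
noncomputable def curv {n : ℕ} (A : Fin 4 → EuclideanSpace ℝ (Fin 4) → Matrix (Fin n) (Fin n) ℂ)
    (i j : Fin 4) (x : EuclideanSpace ℝ (Fin 4)) : Matrix (Fin n) (Fin n) ℂ :=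
  fderiv ℝ (A j) x (e4 i) - fderiv ℝ (A i) x (e4 j) + (A i x * A j x - A j x * A i x)

/-- A connection on `ℝ⁴` is anti-self-dual if `F₁₂ = F₃₄`, `F₁₃ = −F₂₄`, `F₁₄ = F₂₃`
at every point. -/
def IsASD {n : ℕ} (A : Fin 4 → EuclideanSpace ℝ (Fin 4) → Matrix (Fin n) (Fin n) ℂ) : Prop :=
  ∀ x, curv A 0 1 x = curv A 2 3 x
    ∧ curv A 0 2 x = -curv A 1 3 x
    ∧ curv A 0 3 x = curv A 1 2 x

/-!
Write `Dᵢ = ∂ᵢ + [Aᵢ, ·]`. Equality of mixed second derivatives and the Jacobi identity give the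
Bianchi identity `Dᵢ F_{jk} + Dⱼ F_{ki} + Dₖ F_{ij} = 0`. Anti-self-duality replaces each
`F_{ba}`, `F_{ca}`, `F_{da}` in `D_b F_{ba} + D_c F_{ca} + D_d F_{da}` by the component with the
two complementary indices, and the result is the cyclic sum in the Bianchi identity for `b, d, c`.
The anti-self-duality equations are invariant under the Klein four-group acting on the indices,
which is transitive, so this one computation covers every component of the Yang–Mills equation.
-/

open scoped Topology

section Commutator

variable {𝕜 E R : Type*} [NontriviallyNormedField 𝕜] [NormedAddCommGroup E] [NormedSpace 𝕜 E]
  [NormedRing R] [NormedAlgebra 𝕜 R] {f g : E → R} {x : E}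

theorem differentiableAt_lie (hf : DifferentiableAt 𝕜 f x) (hg : DifferentiableAt 𝕜 g x) :
    DifferentiableAt 𝕜 (fun y => ⁅f y, g y⁆) x :=
  (hf.mul hg).sub (hg.mul hf)

theorem fderiv_lie_apply (hf : DifferentiableAt 𝕜 f x) (hg : DifferentiableAt 𝕜 g x) (w : E) :
    fderiv 𝕜 (fun y => ⁅f y, g y⁆) x w = ⁅fderiv 𝕜 f x w, g x⁆ + ⁅f x, fderiv 𝕜 g x w⁆ := by
  simp only [Ring.lie_def]
  rw [fderiv_fun_sub (hf.fun_mul hg) (hg.fun_mul hf), fderiv_fun_mul' hf hg, fderiv_fun_mul' hg hf]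
  simp only [_root_.sub_apply, _root_.add_apply, _root_.smul_apply, smul_eq_mul,
    MulOpposite.smul_eq_mul_unop, MulOpposite.unop_op]
  abel

end Commutator

section Connection

variable (𝕜 : Type*) {E R ι : Type*} [NontriviallyNormedField 𝕜] [NormedAddCommGroup E]
  [NormedSpace 𝕜 E] [NormedRing R] [NormedAlgebra 𝕜 R] (v : ι → E) (A : ι → E → R)

/-- The curvature component `F_{ij}` of the connection on the trivial bundle whose component along
the constant vector field `v i` is `A i`. The vectors `v i` need not be linearly independent. -/
noncomputable def curvature (i j : ι) (x : E) : R :=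
  fderiv 𝕜 (A j) x (v i) - fderiv 𝕜 (A i) x (v j) + ⁅A i x, A j x⁆

/-- The covariant derivative `Dᵢ = ∂ᵢ + [Aᵢ, ·]` on functions with values in the algebra, that is,
on sections of the adjoint bundle. -/
noncomputable def covDeriv (i : ι) (f : E → R) (x : E) : R :=
  fderiv 𝕜 f x (v i) + ⁅A i x, f x⁆

/-- Anti-self-duality at `x` with respect to the ordered indices `a, b, c, d`. The index pairs are
in cyclic order in `b, c, d`, which absorbs the sign of the usual `F_{ac} = -F_{bd}`. -/
structure IsAntiSelfDualAt (a b c d : ι) (x : E) : Prop where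
  ab_eq_cd : curvature 𝕜 v A a b x = curvature 𝕜 v A c d x
  ac_eq_db : curvature 𝕜 v A a c x = curvature 𝕜 v A d b x
  ad_eq_bc : curvature 𝕜 v A a d x = curvature 𝕜 v A b c x

attribute [local instance 100] LieRing.ofAssociativeRing

variable {𝕜 v A} {i j k a b c d : ι} {x : E}

theorem neg_curvature (i j : ι) (x : E) : -curvature 𝕜 v A i j x = curvature 𝕜 v A j i x := by
  rw [curvature, curvature, ← lie_skew (A i x)]
  abel

theorem curvature_self (i : ι) : curvature 𝕜 v A i i = 0 := by
  ext x
  simp [curvature]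

theorem curvature_swap_congr (h : curvature 𝕜 v A a b x = curvature 𝕜 v A c d x) :
    curvature 𝕜 v A b a x = curvature 𝕜 v A d c x := by
  rw [← neg_curvature a b, ← neg_curvature c d, h]

theorem covDeriv_zero (i : ι) : covDeriv 𝕜 v A i 0 = 0 := by
  ext x
  simp [covDeriv]

theorem covDeriv_congr {f g : E → R} (h : f =ᶠ[𝓝 x] g) (i : ι) :
    covDeriv 𝕜 v A i f x = covDeriv 𝕜 v A i g x := by
  rw [covDeriv, covDeriv, h.fderiv_eq, h.eq_of_nhds]

theorem fderiv_curvature_apply (hi : ContDiffAt 𝕜 2 (A i) x) (hj : ContDiffAt 𝕜 2 (A j) x)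
    (w : E) :
    fderiv 𝕜 (curvature 𝕜 v A i j) x w =
      fderiv 𝕜 (fderiv 𝕜 (A j)) x w (v i) - fderiv 𝕜 (fderiv 𝕜 (A i)) x w (v j)
        + (⁅A i x, fderiv 𝕜 (A j) x w⁆ - ⁅A j x, fderiv 𝕜 (A i) x w⁆) := by
  have differentiableAt_fderiv {l : ι} (hl : ContDiffAt 𝕜 2 (A l) x) :
      DifferentiableAt 𝕜 (fderiv 𝕜 (A l)) x :=
    (hl.fderiv_right (m := 1) (by norm_num)).differentiableAt one_ne_zero
  have hdi := (differentiableAt_fderiv hi).clm_apply (differentiableAt_const (v j))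
  have hdj := (differentiableAt_fderiv hj).clm_apply (differentiableAt_const (v i))
  have hAi := hi.differentiableAt two_ne_zero
  have hAj := hj.differentiableAt two_ne_zero
  unfold curvature
  rw [fderiv_fun_add (hdj.fun_sub hdi) (differentiableAt_lie hAi hAj), fderiv_fun_sub hdj hdi,
    _root_.add_apply, _root_.sub_apply, fderiv_lie_apply hAi hAj,
    fderiv_clm_apply (differentiableAt_fderiv hi) (differentiableAt_const _),
    fderiv_clm_apply (differentiableAt_fderiv hj) (differentiableAt_const _),
    ← lie_skew (fderiv 𝕜 (A i) x w)]
  simp only [fderiv_fun_const, Pi.zero_apply, ContinuousLinearMap.comp_zero, zero_add,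
    ContinuousLinearMap.flip_apply]
  abel

theorem bianchi_identity (hi : ContDiffAt 𝕜 (minSmoothness 𝕜 2) (A i) x)
    (hj : ContDiffAt 𝕜 (minSmoothness 𝕜 2) (A j) x)
    (hk : ContDiffAt 𝕜 (minSmoothness 𝕜 2) (A k) x) :
    covDeriv 𝕜 v A i (curvature 𝕜 v A j k) x + covDeriv 𝕜 v A j (curvature 𝕜 v A k i) x
      + covDeriv 𝕜 v A k (curvature 𝕜 v A i j) x = 0 := by
  have hi₂ := hi.of_le le_minSmoothness
  have hj₂ := hj.of_le le_minSmoothness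
  have hk₂ := hk.of_le le_minSmoothness
  simp only [covDeriv, fderiv_curvature_apply hi₂ hj₂, fderiv_curvature_apply hj₂ hk₂,
    fderiv_curvature_apply hk₂ hi₂]
  rw [hi.isSymmSndFDerivAt le_rfl (v j) (v k), hj.isSymmSndFDerivAt le_rfl (v k) (v i),
    hk.isSymmSndFDerivAt le_rfl (v i) (v j)]
  simp only [curvature, lie_add, lie_sub]
  rw [← lie_jacobi (A i x) (A j x) (A k x)]
  abel

namespace IsAntiSelfDualAt

theorem swap_pairs (h : IsAntiSelfDualAt 𝕜 v A a b c d x) : IsAntiSelfDualAt 𝕜 v A c d a b x where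
  ab_eq_cd := h.ab_eq_cd.symm
  ac_eq_db := curvature_swap_congr h.ac_eq_db
  ad_eq_bc := (curvature_swap_congr h.ad_eq_bc).symm

theorem swap_within_pairs (h : IsAntiSelfDualAt 𝕜 v A a b c d x) :
    IsAntiSelfDualAt 𝕜 v A b a d c x where
  ab_eq_cd := curvature_swap_congr h.ab_eq_cd
  ac_eq_db := (curvature_swap_congr h.ac_eq_db).symm
  ad_eq_bc := h.ad_eq_bc.symm

end IsAntiSelfDualAt

theorem yangMills_component_of_isAntiSelfDualAt
    (hb : ContDiffAt 𝕜 (minSmoothness 𝕜 2) (A b) x)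
    (hc : ContDiffAt 𝕜 (minSmoothness 𝕜 2) (A c) x)
    (hd : ContDiffAt 𝕜 (minSmoothness 𝕜 2) (A d) x)
    (h : ∀ᶠ y in 𝓝 x, IsAntiSelfDualAt 𝕜 v A a b c d y) :
    covDeriv 𝕜 v A a (curvature 𝕜 v A a a) x + covDeriv 𝕜 v A b (curvature 𝕜 v A b a) x
      + covDeriv 𝕜 v A c (curvature 𝕜 v A c a) x
      + covDeriv 𝕜 v A d (curvature 𝕜 v A d a) x = 0 := by
  have hba : curvature 𝕜 v A b a =ᶠ[𝓝 x] curvature 𝕜 v A d c :=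
    h.mono fun _ hy => curvature_swap_congr hy.ab_eq_cd
  have hca : curvature 𝕜 v A c a =ᶠ[𝓝 x] curvature 𝕜 v A b d :=
    h.mono fun _ hy => curvature_swap_congr hy.ac_eq_db
  have hda : curvature 𝕜 v A d a =ᶠ[𝓝 x] curvature 𝕜 v A c b :=
    h.mono fun _ hy => curvature_swap_congr hy.ad_eq_bc
  rw [curvature_self, covDeriv_zero, Pi.zero_apply, zero_add, covDeriv_congr hba,
    covDeriv_congr hca, covDeriv_congr hda, add_right_comm]
  exact bianchi_identity hb hd hc

end Connection

theorem instanton_solves_yangMills_general {𝕜 E R : Type*} [NontriviallyNormedField 𝕜]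
    [NormedAddCommGroup E] [NormedSpace 𝕜 E] [NormedRing R] [NormedAlgebra 𝕜 R]
    {v : Fin 4 → E} {A : Fin 4 → E → R} {x : E}
    (hA : ∀ i, ContDiffAt 𝕜 (minSmoothness 𝕜 2) (A i) x)
    (hASD : ∀ᶠ y in 𝓝 x, IsAntiSelfDualAt 𝕜 v A 0 1 2 3 y) (j : Fin 4) :
    ∑ i, covDeriv 𝕜 v A i (curvature 𝕜 v A i j) x = 0 := by
  rw [Fin.sum_univ_four]
  fin_cases j
  · exact yangMills_component_of_isAntiSelfDualAt (hA 1) (hA 2) (hA 3) hASD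
  · rw [← yangMills_component_of_isAntiSelfDualAt (hA 0) (hA 3) (hA 2)
      (hASD.mono fun _ h => h.swap_within_pairs)]
    dsimp only [Fin.mk_one]
    abel
  · rw [← yangMills_component_of_isAntiSelfDualAt (hA 3) (hA 0) (hA 1)
      (hASD.mono fun _ h => h.swap_pairs)]
    dsimp only [Fin.reduceFinMk]
    abel
  · rw [← yangMills_component_of_isAntiSelfDualAt (hA 2) (hA 1) (hA 0)
      (hASD.mono fun _ h => h.swap_pairs.swap_within_pairs)]
    dsimp only [Fin.reduceFinMk]
    abel

/-- Instantons solve the Yang–Mills equation: if `A` is a twice continuously differentiable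
anti-self-dual `u(n)`-connection on `ℝ⁴`, then `Σᵢ (∂ᵢF_{ij} + [A_i, F_{ij}]) = 0` for each
`j` and every point `x`. -/
theorem instanton_solves_yangMills {n : ℕ}
    (A : Fin 4 → EuclideanSpace ℝ (Fin 4) → Matrix (Fin n) (Fin n) ℂ)
    (hA : ∀ μ, ContDiff ℝ 2 (A μ))
    (hskew : ∀ μ x, (A μ x)ᴴ = -(A μ x))
    (hASD : IsASD A) :
    ∀ (j : Fin 4) (x : EuclideanSpace ℝ (Fin 4)),
      ∑ i : Fin 4, (fderiv ℝ (fun x => curv A i j x) x (e4 i)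
        + (A i x * curv A i j x - curv A i j x * A i x)) = 0 := by
  intro j x
  let : NormedRing (Matrix (Fin n) (Fin n) ℂ) := Matrix.frobeniusNormedRing
  let : NormedAlgebra ℝ (Matrix (Fin n) (Fin n) ℂ) := Matrix.frobeniusNormedAlgebra
  refine instanton_solves_yangMills_general (𝕜 := ℝ) (v := e4) (A := A)
    (fun μ => (hA μ).contDiffAt.of_le (by simp)) (.of_forall fun y => ?_) j
  obtain ⟨h01, h02, h03⟩ := hASD y
  exact ⟨h01, h02.trans (neg_curvature 1 3 y), h03⟩
end

section
/- Anti-self-dual connections minimize the Yang–Mills functional in their topological class: let F_{ij} : ℝ⁴ → u(n) (1 ≤ i < j ≤ 4) be measurable maps such that x ↦ ‖F_{ij}(x)‖² is Lebesgue integrable for each pair (i,j). Then ∫_{ℝ⁴} Σ_{1≤i<j≤4} ‖F_{ij}(x)‖² dx ≥ −2 ∫_{ℝ⁴} Re tr(F₁₂F₃₄ − F₁₃F₂₄ + F₁₄F₂₃)(x) dx, with equality if and only if F₁₂ = F₃₄, F₁₃ = −F₂₄ and F₁₄ = F₂₃ almost everywhere. (When F is the curvature of a connection, the left side is the Yang–Mills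 action YM(A) = ‖F‖²_{L²} and the right side equals 8π² times the topological charge k = −(1/8π²)∫ tr(F ∧ F), so YM(A) ≥ 8π²k with equality exactly for instantons.) -/
open Matrix MeasureTheory

/-- Matrices inherit the (entrywise) product measurable structure. -/
noncomputable instance {n : ℕ} : MeasurableSpace (Matrix (Fin n) (Fin n) ℂ) :=
  (inferInstance : MeasurableSpace (Fin n → Fin n → ℂ))

/-- The squared Frobenius norm `‖M‖² = Re tr(M·M†)`. -/
noncomputable def frobSq {n : ℕ} (M : Matrix (Fin n) (Fin n) ℂ) : ℝ :=
  (Matrix.trace (M * Mᴴ)).re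

/-! For `B` skew-Hermitian, `‖A ∓ B‖² = ‖A‖² + ‖B‖² ± 2 Re tr(AB)`, so pointwise the action density
plus twice the charge density is `‖F₁₂ - F₃₄‖² + ‖F₁₃ + F₂₄‖² + ‖F₁₄ - F₂₃‖²`. Integrating this
nonnegative defect gives the inequality, and equality forces the defect to vanish almost everywhere.
-/

section Frobenius

open scoped ComplexOrder

variable {n : ℕ} (A B : Matrix (Fin n) (Fin n) ℂ)

lemma frobSq_nonneg : 0 ≤ frobSq A :=
  (Complex.nonneg_iff.mp (posSemidef_self_mul_conjTranspose A).trace_nonneg).1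

lemma frobSq_eq_zero_iff : frobSq A = 0 ↔ A = 0 := by
  have im_eq_zero : (trace (A * Aᴴ)).im = 0 :=
    (Complex.nonneg_iff.mp (posSemidef_self_mul_conjTranspose A).trace_nonneg).2.symm
  rw [← trace_mul_conjTranspose_self_eq_zero_iff, Complex.ext_iff, im_eq_zero]
  simp [frobSq]

lemma frobSq_neg : frobSq (-A) = frobSq A := by
  simp [frobSq]

lemma frobSq_conjTranspose : frobSq Aᴴ = frobSq A := by
  rw [frobSq, frobSq, conjTranspose_conjTranspose, trace_mul_comm]

lemma frobSq_sub : frobSq (A - B) = frobSq A + frobSq B - 2 * (trace (A * Bᴴ)).re := by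
  have re_trace_symm : (trace (B * Aᴴ)).re = (trace (A * Bᴴ)).re := by
    rw [← conjTranspose_conjTranspose B, ← conjTranspose_mul, trace_conjTranspose,
      conjTranspose_conjTranspose, Complex.star_def, Complex.conj_re]
  simp only [frobSq, conjTranspose_sub, mul_sub, sub_mul, trace_sub, Complex.sub_re,
    re_trace_symm]
  ring

lemma frobSq_add : frobSq (A + B) = frobSq A + frobSq B + 2 * (trace (A * Bᴴ)).re := by
  rw [← sub_neg_eq_add, frobSq_sub, frobSq_neg, conjTranspose_neg, mul_neg, trace_neg,
    Complex.neg_re]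
  ring

lemma two_mul_abs_re_trace_mul_le : 2 * |(trace (A * B)).re| ≤ frobSq A + frobSq B := by
  have frobSq_sub_nonneg := frobSq_nonneg (A - Bᴴ)
  have frobSq_add_nonneg := frobSq_nonneg (A + Bᴴ)
  rw [frobSq_sub, frobSq_conjTranspose, conjTranspose_conjTranspose] at frobSq_sub_nonneg
  rw [frobSq_add, frobSq_conjTranspose, conjTranspose_conjTranspose] at frobSq_add_nonneg
  cases abs_cases (trace (A * B)).re <;> linarith

end Frobenius

section Density

variable {n : ℕ}

/-- The Yang–Mills action density `‖F‖² = Σ_{i<j} ‖F_{ij}‖²` of a matrix-valued 2-form at a point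
of `ℝ⁴`, given by its six components. -/
noncomputable def actionDensity (F12 F13 F14 F23 F24 F34 : Matrix (Fin n) (Fin n) ℂ) : ℝ :=
  frobSq F12 + frobSq F13 + frobSq F14 + frobSq F23 + frobSq F24 + frobSq F34

/-- The real part of the coefficient of `½ tr(F ∧ F)` with respect to the volume form of `ℝ⁴`, for a
matrix-valued 2-form `F` at a point; its integral is the topological charge up to the factor
`-1/(4π²)`. -/
noncomputable def chargeDensity (F12 F13 F14 F23 F24 F34 : Matrix (Fin n) (Fin n) ℂ) : ℝ :=
  (trace (F12 * F34 - F13 * F24 + F14 * F23)).re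

variable {F12 F13 F14 F23 F24 F34 : Matrix (Fin n) (Fin n) ℂ}

lemma actionDensity_add_two_mul_chargeDensity
    (h23 : F23ᴴ = -F23) (h24 : F24ᴴ = -F24) (h34 : F34ᴴ = -F34) :
    actionDensity F12 F13 F14 F23 F24 F34 + 2 * chargeDensity F12 F13 F14 F23 F24 F34 =
      frobSq (F12 - F34) + frobSq (F13 + F24) + frobSq (F14 - F23) := by
  simp only [actionDensity, chargeDensity, frobSq_sub, frobSq_add, h23, h24, h34, mul_neg,
    trace_add, trace_sub, trace_neg, Complex.add_re, Complex.sub_re, Complex.neg_re]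
  ring

lemma neg_two_mul_chargeDensity_le_actionDensity
    (h23 : F23ᴴ = -F23) (h24 : F24ᴴ = -F24) (h34 : F34ᴴ = -F34) :
    -2 * chargeDensity F12 F13 F14 F23 F24 F34 ≤ actionDensity F12 F13 F14 F23 F24 F34 := by
  linarith [actionDensity_add_two_mul_chargeDensity (F12 := F12) (F13 := F13) (F14 := F14)
    h23 h24 h34, frobSq_nonneg (F12 - F34), frobSq_nonneg (F13 + F24), frobSq_nonneg (F14 - F23)]

lemma neg_two_mul_chargeDensity_eq_actionDensity_iff
    (h23 : F23ᴴ = -F23) (h24 : F24ᴴ = -F24) (h34 : F34ᴴ = -F34) :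
    -2 * chargeDensity F12 F13 F14 F23 F24 F34 = actionDensity F12 F13 F14 F23 F24 F34 ↔
      F12 = F34 ∧ F13 = -F24 ∧ F14 = F23 := by
  have nonneg₁ := frobSq_nonneg (F12 - F34)
  have nonneg₂ := frobSq_nonneg (F13 + F24)
  have nonneg₃ := frobSq_nonneg (F14 - F23)
  calc -2 * chargeDensity F12 F13 F14 F23 F24 F34 = actionDensity F12 F13 F14 F23 F24 F34
    _ ↔ frobSq (F12 - F34) + frobSq (F13 + F24) + frobSq (F14 - F23) = 0 := by
      rw [← actionDensity_add_two_mul_chargeDensity h23 h24 h34, neg_mul, neg_eq_iff_add_eq_zero,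
        add_comm]
    _ ↔ F12 = F34 ∧ F13 = -F24 ∧ F14 = F23 := by
      rw [add_eq_zero_iff_of_nonneg (add_nonneg nonneg₁ nonneg₂) nonneg₃,
        add_eq_zero_iff_of_nonneg nonneg₁ nonneg₂, frobSq_eq_zero_iff, frobSq_eq_zero_iff,
        frobSq_eq_zero_iff, sub_eq_zero, sub_eq_zero, add_eq_zero_iff_eq_neg, and_assoc]

end Density

section Integral

variable {n : ℕ} {α : Type*} [MeasurableSpace α] {μ : Measure α}

lemma aemeasurable_trace_mul {A B : α → Matrix (Fin n) (Fin n) ℂ}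
    (hA : AEMeasurable A μ) (hB : AEMeasurable B μ) :
    AEMeasurable (fun x => trace (A x * B x)) μ := by
  have measurable_entry (i j : Fin n) :
      Measurable fun M : Matrix (Fin n) (Fin n) ℂ => M i j :=
    (measurable_pi_apply j).comp (measurable_pi_apply i)
  simp only [trace, diag_apply, mul_apply]
  exact Finset.aemeasurable_fun_sum _ fun i _ => Finset.aemeasurable_fun_sum _ fun j _ =>
    ((measurable_entry i j).comp_aemeasurable hA).mul ((measurable_entry j i).comp_aemeasurable hB)

lemma integrable_re_trace_mul {A B : α → Matrix (Fin n) (Fin n) ℂ}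
    (hA : AEMeasurable A μ) (hB : AEMeasurable B μ)
    (hA_sq : Integrable (fun x => frobSq (A x)) μ) (hB_sq : Integrable (fun x => frobSq (B x)) μ) :
    Integrable (fun x => (trace (A x * B x)).re) μ := by
  refine (hA_sq.add hB_sq).mono' (aemeasurable_trace_mul hA hB).re.aestronglyMeasurable
    (.of_forall fun x => ?_)
  rw [Real.norm_eq_abs, Pi.add_apply]
  linarith [two_mul_abs_re_trace_mul_le (A x) (B x), abs_nonneg (trace (A x * B x)).re]

theorem yangMills_ge_topological_charge_general
    {F12 F13 F14 F23 F24 F34 : α → Matrix (Fin n) (Fin n) ℂ}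
    (hskew : ∀ᵐ x ∂μ, (F23 x)ᴴ = -(F23 x) ∧ (F24 x)ᴴ = -(F24 x) ∧ (F34 x)ᴴ = -(F34 x))
    (m12 : AEMeasurable F12 μ) (m13 : AEMeasurable F13 μ) (m14 : AEMeasurable F14 μ)
    (m23 : AEMeasurable F23 μ) (m24 : AEMeasurable F24 μ) (m34 : AEMeasurable F34 μ)
    (i12 : Integrable (fun x => frobSq (F12 x)) μ) (i13 : Integrable (fun x => frobSq (F13 x)) μ)
    (i14 : Integrable (fun x => frobSq (F14 x)) μ) (i23 : Integrable (fun x => frobSq (F23 x)) μ)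
    (i24 : Integrable (fun x => frobSq (F24 x)) μ) (i34 : Integrable (fun x => frobSq (F34 x)) μ) :
    (∫ x, actionDensity (F12 x) (F13 x) (F14 x) (F23 x) (F24 x) (F34 x) ∂μ
      ≥ -2 * ∫ x, chargeDensity (F12 x) (F13 x) (F14 x) (F23 x) (F24 x) (F34 x) ∂μ)
    ∧ ((∫ x, actionDensity (F12 x) (F13 x) (F14 x) (F23 x) (F24 x) (F34 x) ∂μ
      = -2 * ∫ x, chargeDensity (F12 x) (F13 x) (F14 x) (F23 x) (F24 x) (F34 x) ∂μ)
      ↔ ∀ᵐ x ∂μ, F12 x = F34 x ∧ F13 x = -(F24 x) ∧ F14 x = F23 x) := by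
  have action_integrable : Integrable
      (fun x => actionDensity (F12 x) (F13 x) (F14 x) (F23 x) (F24 x) (F34 x)) μ :=
    ((((i12.add i13).add i14).add i23).add i24).add i34
  have charge_integrable : Integrable
      (fun x => chargeDensity (F12 x) (F13 x) (F14 x) (F23 x) (F24 x) (F34 x)) μ := by
    simp only [chargeDensity, trace_add, trace_sub, Complex.add_re, Complex.sub_re]
    exact ((integrable_re_trace_mul m12 m34 i12 i34).sub
      (integrable_re_trace_mul m13 m24 i13 i24)).add (integrable_re_trace_mul m14 m23 i14 i23)
  have charge_le_action := hskew.mono fun x ⟨h23, h24, h34⟩ =>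
    neg_two_mul_chargeDensity_le_actionDensity (F12 := F12 x) (F13 := F13 x) (F14 := F14 x)
      h23 h24 h34
  rw [← integral_const_mul]
  refine ⟨integral_mono_ae (charge_integrable.const_mul _) action_integrable charge_le_action, ?_⟩
  rw [eq_comm, integral_eq_iff_of_ae_le (charge_integrable.const_mul _) action_integrable
    charge_le_action]
  exact Filter.eventually_congr <| hskew.mono fun x ⟨h23, h24, h34⟩ =>
    neg_two_mul_chargeDensity_eq_actionDensity_iff h23 h24 h34

end Integral

/-- Anti-self-dual connections minimize the Yang–Mills functional in their topological class:
for measurable `u(n)`-valued `F_{ij}` on `ℝ⁴` with integrable `‖F_{ij}‖²`,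
`∫ Σ_{i<j} ‖F_{ij}‖² ≥ −2 ∫ Re tr(F₁₂F₃₄ − F₁₃F₂₄ + F₁₄F₂₃)`, with equality iff the
anti-self-duality relations hold almost everywhere.  (When `F` is the curvature of a
connection, the left side is `YM(A) = ‖F‖²_{L²}` and the right side is `8π²k`.) -/
theorem yangMills_ge_topological_charge {n : ℕ}
    (F12 F13 F14 F23 F24 F34 : EuclideanSpace ℝ (Fin 4) → Matrix (Fin n) (Fin n) ℂ)
    (hskew : ∀ x, (F12 x)ᴴ = -(F12 x) ∧ (F13 x)ᴴ = -(F13 x) ∧ (F14 x)ᴴ = -(F14 x)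
      ∧ (F23 x)ᴴ = -(F23 x) ∧ (F24 x)ᴴ = -(F24 x) ∧ (F34 x)ᴴ = -(F34 x))
    (hmeas : Measurable F12 ∧ Measurable F13 ∧ Measurable F14
      ∧ Measurable F23 ∧ Measurable F24 ∧ Measurable F34)
    (hint : Integrable (fun x => frobSq (F12 x)) ∧ Integrable (fun x => frobSq (F13 x))
      ∧ Integrable (fun x => frobSq (F14 x)) ∧ Integrable (fun x => frobSq (F23 x))
      ∧ Integrable (fun x => frobSq (F24 x)) ∧ Integrable (fun x => frobSq (F34 x))) :
    (∫ x, (frobSq (F12 x) + frobSq (F13 x) + frobSq (F14 x)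
        + frobSq (F23 x) + frobSq (F24 x) + frobSq (F34 x))
      ≥ -2 * ∫ x, (Matrix.trace (F12 x * F34 x - F13 x * F24 x + F14 x * F23 x)).re)
    ∧ ((∫ x, (frobSq (F12 x) + frobSq (F13 x) + frobSq (F14 x)
        + frobSq (F23 x) + frobSq (F24 x) + frobSq (F34 x))
      = -2 * ∫ x, (Matrix.trace (F12 x * F34 x - F13 x * F24 x + F14 x * F23 x)).re)
      ↔ (∀ᵐ x, F12 x = F34 x ∧ F13 x = -(F24 x) ∧ F14 x = F23 x)) := by
  obtain ⟨m12, m13, m14, m23, m24, m34⟩ := hmeas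
  obtain ⟨i12, i13, i14, i23, i24, i34⟩ := hint
  exact yangMills_ge_topological_charge_general (.of_forall fun x => (hskew x).2.2.2)
    m12.aemeasurable m13.aemeasurable m14.aemeasurable m23.aemeasurable m24.aemeasurable
    m34.aemeasurable i12 i13 i14 i23 i24 i34
end
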